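/- The function q ↦ 1 - Θ(q), where Θ(q) = Σ_{n∈ℤ} (-1)^n q^{n²} = 1 + 2·Σ_{n≥1}(-1)^n q^{n²}, is a valid cumulative distribution function on [0,1]: it is nondecreasing on [0,1), tends to 0 as q → 0⁺, and tends to 1 as q → 1⁻. In particular, by the Jacobi triple product, Θ(q) = ∏_{j=1}^{∞}(1-q^{2j})(1-q^{2j-1})² for 0 ≤ q < 1, so Θ(q) → 0 as q → 1⁻. -/

import Mathlib

open Filter Set

/-- The Jacobi theta function `Θ(q) = 1 + 2 ∑_{n≥1} (-1)^n q^{n²}`. -/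
noncomputable def jacobiThetaQ (q : ℝ) : ℝ :=
  1 + 2 * ∑' n : ℕ, (-1 : ℝ) ^ (n + 1) * q ^ ((n + 1) ^ 2)

namespace ThetaAux

open Topology

/-- Finite product `∏_{i=1}^n (1 - Q^i)`. -/
noncomputable def P (Q : ℝ) (n : ℕ) : ℝ := ∏ i ∈ Finset.range n, (1 - Q ^ (i + 1))

/-- Reciprocal of `P`, extended by zero to negative integers. -/
noncomputable def g (Q : ℝ) (m : ℤ) : ℝ := if 0 ≤ m then (P Q m.toNat)⁻¹ else 0

/-- The weight `(-1)^k q^{k²}`. -/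
noncomputable def w (q : ℝ) (k : ℤ) : ℝ := (-1 : ℝ) ^ k * q ^ (k ^ 2)

lemma fac_pos {Q : ℝ} (h0 : 0 < Q) (h1 : Q < 1) (i : ℕ) : 0 < 1 - Q ^ (i + 1) := by
  have := pow_lt_one₀ h0.le h1 (Nat.succ_ne_zero i)
  simp only [Nat.succ_eq_add_one] at this
  linarith

lemma P_pos {Q : ℝ} (h0 : 0 < Q) (h1 : Q < 1) (n : ℕ) : 0 < P Q n :=
  Finset.prod_pos fun i _ => fac_pos h0 h1 i

lemma P_succ (Q : ℝ) (n : ℕ) : P Q (n + 1) = P Q n * (1 - Q ^ (n + 1)) :=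
  Finset.prod_range_succ _ _

lemma P_le_one {Q : ℝ} (h0 : 0 < Q) (h1 : Q < 1) (n : ℕ) : P Q n ≤ 1 :=
  Finset.prod_le_one (fun i _ => (fac_pos h0 h1 i).le)
    fun i _ => by have := pow_pos h0 (i + 1); linarith

lemma P_anti {Q : ℝ} (h0 : 0 < Q) (h1 : Q < 1) : Antitone (P Q) := by
  refine antitone_nat_of_succ_le fun n => ?_
  rw [P_succ]
  have := P_pos h0 h1 n
  have h2 := pow_pos h0 (n + 1)
  nlinarith

lemma P_lim {Q : ℝ} (h0 : 0 < Q) (h1 : Q < 1) :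
    ∃ L : ℝ, 0 < L ∧ (∀ n, L ≤ P Q n) ∧ Tendsto (P Q) atTop (𝓝 L) := by
  have hs : Summable fun i : ℕ => ‖-Q ^ (i + 1)‖ := by
    have : Summable fun i : ℕ => Q ^ (i + 1) :=
      (summable_nat_add_iff 1).2 (summable_geometric_of_lt_one h0.le h1)
    refine this.congr fun i => ?_
    rw [norm_neg, Real.norm_of_nonneg (pow_pos h0 _).le]
  have hm := multipliable_one_add_of_summable hs
  have ht := hm.hasProd.tendsto_prod_nat
  have hne : ∏' i : ℕ, (1 + -Q ^ (i + 1)) ≠ 0 := by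
    refine tprod_one_add_ne_zero_of_summable (f := fun i : ℕ => -Q ^ (i + 1)) ?_ hs
    intro i
    have := fac_pos h0 h1 i
    rw [← sub_eq_add_neg]
    exact this.ne'
  have ht' : Tendsto (P Q) atTop (𝓝 (∏' i : ℕ, (1 + -Q ^ (i + 1)))) := by
    refine ht.congr fun n => ?_
    simp [P, sub_eq_add_neg]
  have hle := fun n => (P_anti h0 h1).le_of_tendsto ht' n
  refine ⟨_, lt_of_le_of_ne ?_ hne.symm, hle, ht'⟩
  exact ge_of_tendsto' ht' fun n => (P_pos h0 h1 n).le

lemma g_rec {Q : ℝ} (h0 : 0 < Q) (h1 : Q < 1) (m : ℤ) : g Q (m - 1) = (1 - Q ^ m) * g Q m := by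
  rcases lt_trichotomy m 0 with h | h | h
  · simp [g, show ¬ (0 ≤ m) by omega, show ¬ (1 ≤ m) by omega]
  · subst h; simp [g]
  · obtain ⟨n, rfl⟩ : ∃ n : ℕ, m = (n : ℤ) + 1 := ⟨(m - 1).toNat, by omega⟩
    have e1 : ((n : ℤ) + 1 - 1).toNat = n := by omega
    have e2 : ((n : ℤ) + 1).toNat = n + 1 := by omega
    have hp := (P_pos h0 h1 n).ne'
    have hf := (fac_pos h0 h1 n).ne'
    have e3 : Q ^ ((n : ℤ) + 1) = Q ^ (n + 1) := by exact_mod_cast zpow_natCast Q (n + 1)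
    rw [g, g, if_pos (by omega), if_pos (by omega), e1, e2, P_succ, e3]
    field_simp

lemma g_nonneg {Q : ℝ} (h0 : 0 < Q) (h1 : Q < 1) (m : ℤ) : 0 ≤ g Q m := by
  unfold g; split_ifs
  · exact (inv_pos.2 (P_pos h0 h1 _)).le
  · exact le_rfl

/-- The coefficient (a symmetric `q`-binomial). -/
noncomputable def c (Q : ℝ) (n : ℕ) (k : ℤ) : ℝ := P Q (2 * n) * (g Q (n - k) * g Q (n + k))

lemma c_rec {Q : ℝ} (h0 : 0 < Q) (h1 : Q < 1) (n : ℕ) (k : ℤ) :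
    c Q (n + 1) k = (1 + Q ^ (2 * n + 1)) * c Q n k
      + Q * (Q ^ ((n : ℤ) - k) * c Q n (k - 1) + Q ^ ((n : ℤ) + k) * c Q n (k + 1)) := by
  have hQ : Q ≠ 0 := h0.ne'
  have a1 := g_rec h0 h1 ((n : ℤ) + 1 - k)
  have a2 := g_rec h0 h1 ((n : ℤ) - k)
  have b1 := g_rec h0 h1 ((n : ℤ) + 1 + k)
  have b2 := g_rec h0 h1 ((n : ℤ) + k)
  rw [show (n : ℤ) + 1 - k - 1 = n - k by ring, show (n : ℤ) + 1 - k = (n - k) + 1 by ring,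
    zpow_add_one₀ hQ] at a1
  rw [show (n : ℤ) + 1 + k - 1 = n + k by ring, show (n : ℤ) + 1 + k = (n + k) + 1 by ring,
    zpow_add_one₀ hQ] at b1
  have huv : Q ^ (2 * n) = Q ^ ((n : ℤ) - k) * Q ^ ((n : ℤ) + k) := by
    rw [← zpow_add₀ hQ, ← zpow_natCast]; congr 1; push_cast; ring
  unfold c
  rw [show 2 * (n + 1) = 2 * n + 1 + 1 by ring, P_succ, P_succ]
  push_cast
  rw [show (n : ℤ) + 1 - k = (n - k) + 1 by ring, show (n : ℤ) + 1 + k = (n + k) + 1 by ring,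
    show (n : ℤ) - (k - 1) = (n - k) + 1 by ring, show (n : ℤ) + (k - 1) = n + k - 1 by ring,
    show (n : ℤ) - (k + 1) = n - k - 1 by ring, show (n : ℤ) + (k + 1) = n + k + 1 by ring,
    a2, b2, a1, b1, pow_succ Q (2 * n + 1), pow_succ Q (2 * n), huv]
  ring

lemma w_shift {q : ℝ} (h0 : 0 < q) (n : ℕ) (k : ℤ) :
    w q k * ((q ^ 2) * (q ^ 2) ^ ((n : ℤ) - k)) = - q ^ (2 * n + 1) * w q (k - 1) := by
  have hq : q ≠ 0 := h0.ne'
  unfold w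
  rw [← zpow_natCast q 2, ← zpow_mul, ← zpow_natCast q (2 * n + 1), zpow_sub₀ (by norm_num),
    mul_assoc, ← zpow_add₀ hq, ← zpow_add₀ hq]
  have : q ^ (k ^ 2 + (((2 : ℕ) : ℤ) + ((2 : ℕ) : ℤ) * ((n : ℤ) - k)))
      = q ^ (((2 * n + 1 : ℕ) : ℤ)) * q ^ ((k - 1) ^ 2) := by
    rw [← zpow_add₀ hq]; congr 1; push_cast; ring
  rw [this]
  ring

lemma w_neg (q : ℝ) (k : ℤ) : w q (-k) = w q k := by
  unfold w; simp [zpow_neg, ← inv_zpow]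

lemma w_shift' {q : ℝ} (h0 : 0 < q) (n : ℕ) (k : ℤ) :
    w q k * ((q ^ 2) * (q ^ 2) ^ ((n : ℤ) + k)) = - q ^ (2 * n + 1) * w q (k + 1) := by
  have := w_shift h0 n (-k)
  rw [w_neg, show -k - 1 = -(k + 1) by ring, w_neg, sub_neg_eq_add] at this
  exact this

lemma abs_w {q : ℝ} (h0 : 0 < q) (k : ℤ) : |w q k| = q ^ (k ^ 2) := by
  unfold w
  rw [abs_mul, abs_zpow, abs_neg, abs_one, one_zpow, one_mul, abs_of_pos (zpow_pos h0 _)]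

lemma summable_nat {q : ℝ} (h0 : 0 ≤ q) (h1 : q < 1) :
    Summable fun n : ℕ => q ^ ((n + 1) ^ 2) := by
  refine Summable.of_nonneg_of_le (fun n => pow_nonneg h0 _) (fun n => ?_)
    (summable_geometric_of_lt_one h0 h1)
  exact pow_le_pow_of_le_one h0 h1.le (by nlinarith)

lemma w_nat (q : ℝ) (n : ℕ) : w q ((n : ℤ) + 1) = (-1 : ℝ) ^ (n + 1) * q ^ ((n + 1) ^ 2) := by
  unfold w
  have e1 : (-1 : ℝ) ^ ((n : ℤ) + 1) = (-1 : ℝ) ^ (n + 1) := by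
    exact_mod_cast zpow_natCast (-1 : ℝ) (n + 1)
  have e2 : q ^ (((n : ℤ) + 1) ^ 2) = q ^ ((n + 1) ^ 2) := by
    exact_mod_cast zpow_natCast q ((n + 1) ^ 2)
  rw [e1, e2]

lemma summable_theta {q : ℝ} (h0 : 0 ≤ q) (h1 : q < 1) :
    Summable fun n : ℕ => (-1 : ℝ) ^ (n + 1) * q ^ ((n + 1) ^ 2) := by
  refine Summable.of_norm ((summable_nat h0 h1).congr fun n => ?_)
  rw [norm_mul, norm_pow, norm_neg, norm_one, one_pow, one_mul,
    Real.norm_of_nonneg (pow_nonneg h0 _)]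

lemma hasSum_w {q : ℝ} (h0 : 0 < q) (h1 : q < 1) : HasSum (w q) (jacobiThetaQ q) := by
  have h := (summable_theta h0.le h1).hasSum
  have e : jacobiThetaQ q = (∑' n : ℕ, (-1 : ℝ) ^ (n + 1) * q ^ ((n + 1) ^ 2)) + w q 0
      + (∑' n : ℕ, (-1 : ℝ) ^ (n + 1) * q ^ ((n + 1) ^ 2)) := by
    unfold jacobiThetaQ; simp only [w]; simp; ring
  rw [e]
  refine HasSum.of_add_one_of_neg_add_one (f := w q) ?_ ?_
  · simpa only [w_nat] using h
  · refine h.congr_fun fun n => ?_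
    rw [w_neg, w_nat]

lemma summable_q {q : ℝ} (h0 : 0 < q) (h1 : q < 1) : Summable fun k : ℤ => q ^ (k ^ 2) := by
  have := (hasSum_w h0 h1).summable.abs
  simpa only [abs_w h0] using this

lemma c_bound {Q : ℝ} (h0 : 0 < Q) (h1 : Q < 1) :
    ∃ C : ℝ, ∀ n k, |c Q n k| ≤ C := by
  obtain ⟨L, hL, hle, -⟩ := P_lim h0 h1
  have hg : ∀ m, g Q m ≤ L⁻¹ := by
    intro m; unfold g; split_ifs
    · exact inv_anti₀ hL (hle _)
    · exact (inv_pos.2 hL).le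
  refine ⟨1 * (L⁻¹ * L⁻¹), fun n k => ?_⟩
  unfold c
  have hi := (inv_pos.2 hL).le
  rw [abs_of_nonneg (mul_nonneg (P_pos h0 h1 _).le (mul_nonneg (g_nonneg h0 h1 _)
    (g_nonneg h0 h1 _)))]
  exact mul_le_mul (P_le_one h0 h1 _) (mul_le_mul (hg _) (hg _) (g_nonneg h0 h1 _) hi)
    (mul_nonneg (g_nonneg h0 h1 _) (g_nonneg h0 h1 _)) zero_le_one

lemma summable_wc {q : ℝ} (h0 : 0 < q) (h1 : q < 1) (n : ℕ) :
    Summable fun k => w q k * c (q ^ 2) n k := by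
  obtain ⟨C, hC⟩ := c_bound (pow_pos h0 2) (pow_lt_one₀ h0.le h1 two_ne_zero)
  refine Summable.of_norm_bounded ((summable_q h0 h1).mul_right C) fun k => ?_
  rw [Real.norm_eq_abs, abs_mul, abs_w h0]
  exact mul_le_mul_of_nonneg_left (hC n k) (zpow_pos h0 _).le

/-- Finite form of the triple product. -/
lemma finite_jtp {q : ℝ} (h0 : 0 < q) (h1 : q < 1) (n : ℕ) :
    ∑' k, w q k * c (q ^ 2) n k = ∏ j ∈ Finset.range n, (1 - q ^ (2 * j + 1)) ^ 2 := by
  have hQ0 := pow_pos h0 2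
  have hQ1 := pow_lt_one₀ h0.le h1 two_ne_zero
  induction n with
  | zero =>
    rw [tsum_eq_single 0]
    · simp [w, c, g, P]
    · intro k hk
      rcases lt_or_gt_of_ne hk with h | h
      · simp [c, g, show ¬ (0 ≤ k) by omega]
      · simp [c, g, show ¬ (k ≤ 0) by omega]
  | succ n ih =>
    rw [Finset.prod_range_succ, ← ih]
    have hs := (summable_wc h0 h1 n).hasSum
    have hs1 := (Equiv.subRight (1 : ℤ)).hasSum_iff.2 hs
    have hs2 := (Equiv.addRight (1 : ℤ)).hasSum_iff.2 hs
    have := ((hs.mul_left (1 + (q ^ 2) ^ (2 * n + 1))).add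
      (hs1.mul_left (- q ^ (2 * n + 1)))).add (hs2.mul_left (- q ^ (2 * n + 1)))
    have h2 := this.tsum_eq
    trans
    swap
    · refine h2.trans ?_
      ring
    · refine tsum_congr fun k => ?_
      rw [c_rec hQ0 hQ1]
      simp only [Function.comp, Equiv.subRight_apply, Equiv.coe_addRight]
      have e1 := w_shift h0 n k
      have e2 := w_shift' h0 n k
      linear_combination c (q ^ 2) n (k - 1) * e1 + c (q ^ 2) n (k + 1) * e2

lemma g_tendsto {Q L : ℝ} (hL : 0 < L) (h : Tendsto (P Q) atTop (𝓝 L)) (k : ℤ) :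
    Tendsto (fun n : ℕ => g Q ((n : ℤ) + k)) atTop (𝓝 L⁻¹) := by
  have ht : Tendsto (fun n : ℕ => ((n : ℤ) + k).toNat) atTop atTop := by
    refine tendsto_atTop.2 fun b => ?_
    filter_upwards [eventually_ge_atTop (b + k.natAbs)] with n hn
    omega
  refine ((h.comp ht).inv₀ hL.ne').congr' ?_
  filter_upwards [eventually_ge_atTop k.natAbs] with n hn
  rw [g, if_pos (by omega)]; rfl

lemma jtp_lim {q : ℝ} (h0 : 0 < q) (h1 : q < 1) :
    Tendsto (fun n => ∏ j ∈ Finset.range n,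
      ((1 - q ^ (2 * (j + 1))) * (1 - q ^ (2 * (j + 1) - 1)) ^ 2)) atTop
      (𝓝 (jacobiThetaQ q)) := by
  have hQ0 := pow_pos h0 2
  have hQ1 := pow_lt_one₀ h0.le h1 two_ne_zero
  obtain ⟨L, hL, -, hlim⟩ := P_lim hQ0 hQ1
  obtain ⟨C, hC⟩ := c_bound hQ0 hQ1
  have hT : Tendsto (fun n => ∑' k, w q k * c (q ^ 2) n k) atTop
      (𝓝 (∑' k, w q k * (L * (L⁻¹ * L⁻¹)))) := by
    refine tendsto_tsum_of_dominated_convergence ((summable_q h0 h1).mul_right C) ?_ ?_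
    · intro k
      refine Tendsto.const_mul _ ?_
      refine (hlim.comp (tendsto_id.const_mul_atTop' two_pos)).mul ((?_ : Tendsto _ _ _).mul
        (g_tendsto hL hlim k))
      exact g_tendsto hL hlim (-k)
    · refine Eventually.of_forall fun n k => ?_
      rw [Real.norm_eq_abs, abs_mul, abs_w h0]
      exact mul_le_mul_of_nonneg_left (hC n k) (zpow_pos h0 _).le
  rw [((hasSum_w h0 h1).mul_right _).tsum_eq] at hT
  have := hlim.mul hT
  have e : L * (jacobiThetaQ q * (L * (L⁻¹ * L⁻¹))) = jacobiThetaQ q := by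
    field_simp
  rw [e] at this
  refine this.congr fun n => ?_
  rw [finite_jtp h0 h1, P, ← Finset.prod_mul_distrib]
  refine Finset.prod_congr rfl fun j _ => ?_
  rw [← pow_mul, show 2 * (j + 1) - 1 = 2 * j + 1 by omega]

lemma theta_zero : jacobiThetaQ 0 = 1 := by
  unfold jacobiThetaQ; simp

lemma jtp_lim' {q : ℝ} (hq : q ∈ Set.Ico (0 : ℝ) 1) :
    Tendsto (fun n => ∏ j ∈ Finset.range n,
      ((1 - q ^ (2 * (j + 1))) * (1 - q ^ (2 * (j + 1) - 1)) ^ 2)) atTop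
      (𝓝 (jacobiThetaQ q)) := by
  rcases hq.1.eq_or_lt with h | h
  · subst h
    rw [theta_zero]
    refine tendsto_const_nhds.congr fun n => ?_
    symm
    refine Finset.prod_eq_one fun j _ => ?_
    rw [show 2 * (j + 1) - 1 = 2 * j + 1 by omega]
    simp
  · exact jtp_lim h hq.2

lemma mult {q : ℝ} (hq : q ∈ Set.Ico (0 : ℝ) 1) :
    Multipliable fun j : ℕ => ((1 - q ^ (2 * (j + 1))) * (1 - q ^ (2 * (j + 1) - 1)) ^ 2) := by
  have key : ∀ f : ℕ → ℕ, (∀ j, j ≤ f j) → Multipliable fun j => 1 - q ^ f j := by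
    intro f hf
    have : Summable fun j => -q ^ f j := by
      refine Summable.neg ?_
      exact Summable.of_nonneg_of_le (fun n => pow_nonneg hq.1 _)
        (fun n => pow_le_pow_of_le_one hq.1 hq.2.le (hf n))
        (summable_geometric_of_lt_one hq.1 hq.2)
    simpa only [sub_eq_add_neg] using Real.multipliable_one_add_of_summable this
  have h1 := key (fun j => 2 * (j + 1)) (fun j => by omega)
  have h2 := key (fun j => 2 * (j + 1) - 1) (fun j => by omega)
  simpa only [sq] using h1.mul (h2.mul h2)

lemma factor_nonneg {q : ℝ} (hq : q ∈ Set.Ico (0 : ℝ) 1) (a b : ℕ) :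
    0 ≤ (1 - q ^ a) * (1 - q ^ b) ^ 2 :=
  mul_nonneg (sub_nonneg.2 (pow_le_one₀ hq.1 hq.2.le)) (sq_nonneg _)

lemma factor_le_one {q : ℝ} (hq : q ∈ Set.Ico (0 : ℝ) 1) (a b : ℕ) :
    (1 - q ^ a) * (1 - q ^ b) ^ 2 ≤ 1 := by
  have h1 := pow_nonneg hq.1 a
  have h2 := pow_nonneg hq.1 b
  have h4 := pow_le_one₀ (n := b) hq.1 hq.2.le
  exact mul_le_one₀ (by linarith) (sq_nonneg _) (pow_le_one₀ (by linarith) (by linarith))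

lemma theta_anti {p q : ℝ} (hp : p ∈ Set.Ico (0 : ℝ) 1) (hq : q ∈ Set.Ico (0 : ℝ) 1)
    (h : p ≤ q) : jacobiThetaQ q ≤ jacobiThetaQ p := by
  refine le_of_tendsto_of_tendsto' (jtp_lim' hq) (jtp_lim' hp) fun n => ?_
  refine Finset.prod_le_prod (fun j _ => factor_nonneg hq _ _) fun j _ => ?_
  have e : ∀ a, p ^ a ≤ q ^ a := fun a => pow_le_pow_left₀ hp.1 h a
  have f : ∀ a, q ^ a ≤ 1 := fun a => pow_le_one₀ hq.1 hq.2.le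
  refine mul_le_mul (by linarith [e (2 * (j + 1))])
    (pow_le_pow_left₀ (by linarith [f (2 * (j + 1) - 1)]) (by linarith [e (2 * (j + 1) - 1)]) 2)
    (sq_nonneg _) ?_
  linarith [e (2 * (j + 1)), f (2 * (j + 1))]

lemma theta_nonneg {q : ℝ} (hq : q ∈ Set.Ico (0 : ℝ) 1) : 0 ≤ jacobiThetaQ q :=
  ge_of_tendsto' (jtp_lim' hq) fun _ => Finset.prod_nonneg fun _ _ => factor_nonneg hq _ _

lemma theta_le {q : ℝ} (hq : q ∈ Set.Ico (0 : ℝ) 1) : jacobiThetaQ q ≤ 1 - q ^ 2 := by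
  refine le_of_tendsto ((tendsto_add_atTop_iff_nat 1).2 (jtp_lim' hq))
    (Eventually.of_forall fun n => ?_)
  rw [Finset.prod_range_succ']
  have h1 : ∏ j ∈ Finset.range n, ((1 - q ^ (2 * (j + 1 + 1))) *
      (1 - q ^ (2 * (j + 1 + 1) - 1)) ^ 2) ≤ 1 :=
    Finset.prod_le_one (fun j _ => factor_nonneg hq _ _) fun j _ => factor_le_one hq _ _
  refine (mul_le_of_le_one_left (factor_nonneg hq _ _) h1).trans ?_
  have := pow_le_one₀ (n := 2) hq.1 hq.2.le
  simp only [zero_add, mul_one]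
  refine mul_le_of_le_one_right (by linarith) (pow_le_one₀ ?_ ?_) <;> norm_num <;>
    linarith [hq.1, hq.2]

lemma theta_lower {q : ℝ} (hq : q ∈ Set.Ico (0 : ℝ) 1) :
    1 - jacobiThetaQ q ≤ 2 * (q * (1 - q)⁻¹) := by
  have hs := summable_theta hq.1 hq.2
  have h := (hasSum_geometric_of_lt_one hq.1 hq.2).mul_left q
  have : -(∑' n : ℕ, (-1 : ℝ) ^ (n + 1) * q ^ ((n + 1) ^ 2)) ≤ q * (1 - q)⁻¹ := by
    rw [← tsum_neg, ← h.tsum_eq]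
    refine hs.neg.tsum_le_tsum (fun n => ?_) h.summable
    refine (neg_le_abs _).trans ?_
    rw [abs_mul, abs_pow, abs_neg, abs_one, one_pow, one_mul, abs_of_nonneg (pow_nonneg hq.1 _),
      ← pow_succ']
    exact pow_le_pow_of_le_one hq.1 hq.2.le (by nlinarith)
  unfold jacobiThetaQ
  linarith

end ThetaAux

/-- `q ↦ 1 - Θ(q)` is a valid distribution function on `[0,1]`: it is
nondecreasing on `[0,1)`, tends to `0` as `q → 0⁺`, tends to `1` as `q → 1⁻`,
and `Θ` has the Jacobi triple product representation on `[0,1)`. -/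
theorem one_sub_theta_is_cdf :
    MonotoneOn (fun q => 1 - jacobiThetaQ q) (Set.Ico (0 : ℝ) 1) ∧
    Filter.Tendsto (fun q => 1 - jacobiThetaQ q)
      (nhdsWithin 0 (Set.Ioi (0 : ℝ))) (nhds 0) ∧
    Filter.Tendsto (fun q => 1 - jacobiThetaQ q)
      (nhdsWithin 1 (Set.Iio (1 : ℝ))) (nhds 1) ∧
    ∀ q ∈ Set.Ico (0 : ℝ) 1,
      jacobiThetaQ q =
        ∏' j : ℕ, ((1 - q ^ (2 * (j + 1))) * (1 - q ^ (2 * (j + 1) - 1)) ^ 2) := by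
  refine ⟨?_, ?_, ?_, ?_⟩
  · intro p hp q hq h
    have := ThetaAux.theta_anti hp hq h
    simp only
    linarith
  · have hI : Set.Ioo (0 : ℝ) 1 ∈ nhdsWithin 0 (Set.Ioi (0 : ℝ)) := Ioo_mem_nhdsGT one_pos
    have hc : Tendsto (fun q : ℝ => 2 * (q * (1 - q)⁻¹)) (nhdsWithin 0 (Set.Ioi (0 : ℝ)))
        (nhds 0) := by
      have : ContinuousAt (fun q : ℝ => 2 * (q * (1 - q)⁻¹)) 0 := by
        refine continuousAt_const.mul (continuousAt_id.mul (ContinuousAt.inv₀ ?_ ?_))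
        · fun_prop
        · norm_num
      have h2 := this.tendsto
      simp only [zero_mul, mul_zero] at h2
      exact h2.mono_left nhdsWithin_le_nhds
    refine tendsto_of_tendsto_of_tendsto_of_le_of_le' tendsto_const_nhds hc ?_ ?_
    · filter_upwards [hI] with q hq
      have := ThetaAux.theta_le ⟨hq.1.le, hq.2⟩
      nlinarith [sq_nonneg q]
    · filter_upwards [hI] with q hq
      exact ThetaAux.theta_lower ⟨hq.1.le, hq.2⟩
  · have hI : Set.Ioo (0 : ℝ) 1 ∈ nhdsWithin 1 (Set.Iio (1 : ℝ)) := Ioo_mem_nhdsLT one_pos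
    have hc : Tendsto (fun q : ℝ => q ^ 2) (nhdsWithin 1 (Set.Iio (1 : ℝ))) (nhds 1) := by
      have h2 := (continuous_pow (M := ℝ) 2).tendsto 1
      rw [one_pow] at h2
      exact h2.mono_left nhdsWithin_le_nhds
    refine tendsto_of_tendsto_of_tendsto_of_le_of_le' hc tendsto_const_nhds ?_ ?_
    · filter_upwards [hI] with q hq
      have := ThetaAux.theta_le ⟨hq.1.le, hq.2⟩
      linarith
    · filter_upwards [hI] with q hq
      have := ThetaAux.theta_nonneg ⟨hq.1.le, hq.2⟩
      linarith
  · intro q hq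
    exact tendsto_nhds_unique (ThetaAux.jtp_lim' hq) (ThetaAux.mult hq).hasProd.tendsto_prod_nat
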